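/- Algorithm Square is O(1)-competitive: there exists an absolute constant c (independent of the request sequence) such that for every request sequence R, cost(Square,R) ≤ c·|opt|. -/

import Mathlib

open Finset

/-- A replica is a pair `(v, t)` of a network node and a time. -/
abbrev Replica : Type := ℕ × ℕ

/-- A (directed) grid edge is a pair of replicas. -/
abbrev GEdge : Type := Replica × Replica

/-- Horizontal directed edge `((v,t),(v+1,t))`. -/
def isHoriz (e : GEdge) : Prop := e.2 = (e.1.1 + 1, e.1.2)

/-- Vertical arc `((v,t),(v,t+1))`. -/
def isArc (e : GEdge) : Prop := e.2 = (e.1.1, e.1.2 + 1)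

def isGridEdge (e : GEdge) : Prop := isHoriz e ∨ isArc e

/-- The quarter ball `B(r,ρ)`: replicas `(u,s)` with `u ≤ v`, `s ≤ t` and
`(v−u)+(t−s) ≤ ρ`. -/
def qball (r : Replica) (ρ : ℕ) : Set Replica :=
  {q | q.1 ≤ r.1 ∧ q.2 ≤ r.2 ∧ (r.1 - q.1) + (r.2 - q.2) ≤ ρ}

/-- Grid edges with both endpoints in the quarter ball `B(r,ρ)`. -/
def ballEdge (r : Replica) (ρ : ℕ) (e : GEdge) : Prop :=
  isGridEdge e ∧ e.1 ∈ qball r ρ ∧ e.2 ∈ qball r ρ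

/-- Two quarter balls are edge-disjoint if they share no grid edge. -/
def BallsEdgeDisjoint (r : Replica) (ρ : ℕ) (r' : Replica) (ρ' : ℕ) : Prop :=
  ∀ e : GEdge, ¬ (ballEdge r ρ e ∧ ballEdge r' ρ' e)

/-- The square `Sq(r,ρ) = [v−ρ,v] × [t−ρ,t]`. -/
def SqRect (r : Replica) (ρ : ℕ) : Set Replica :=
  {q | r.1 - ρ ≤ q.1 ∧ q.1 ≤ r.1 ∧ r.2 - ρ ≤ q.2 ∧ q.2 ≤ r.2}

/-- Directed `L∞` distance `d∞(q,r)`: `max(v−u, t−s)` if `u ≤ v` and `s ≤ t`,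
and `∞` otherwise. -/
def distInf (q r : Replica) : ℕ∞ :=
  if q.1 ≤ r.1 ∧ q.2 ≤ r.2 then ((max (r.1 - q.1) (r.2 - q.2) : ℕ) : ℕ∞) else ⊤

/-- The replicas of an edge set: `(0,0)` together with all endpoints of its edges. -/
def Repl (F : Finset GEdge) : Set Replica :=
  insert ((0, 0) : Replica) {q | ∃ e ∈ F, q = e.1 ∨ q = e.2}

/-- The arcs of the vertical path at node `u` from time `s` to time `τ`. -/
def vertPath (u s τ : ℕ) : Finset GEdge :=
  (Finset.range (τ - s)).image (fun k => ((u, s + k), (u, s + k + 1)))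

/-- The horizontal edges of the path at time `τ` from node `u` to node `w`. -/
def horizPath (τ u w : ℕ) : Finset GEdge :=
  (Finset.range (w - u)).image (fun k => ((u + k, τ), (u + k + 1, τ)))

/-- A directed path from `a` to `b` all of whose edges belong to `F`. -/
def PathIn (F : Finset GEdge) (a b : Replica) : Prop :=
  ∃ (L : ℕ) (f : ℕ → Replica), f 0 = a ∧ f L = b ∧ ∀ k < L, (f k, f (k + 1)) ∈ F

/-- An execution of Algorithm `Square` on a request sequence
`r_1 = (v 1, t 1), …, r_N = (v N, t N)` (with `t 0 = 0` and nondecreasing times).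
`sol i` is the edge set after handling request `i`; `ρ i` is the radius of
request `i`; `(u' i, s' i)` is its closest replica and `(us i, ss i)` its
serving replica.  The fields record the specification SQ1–SQ5. -/
structure SquareRun where
  N : ℕ
  v : ℕ → ℕ
  t : ℕ → ℕ
  ρ : ℕ → ℕ
  u' : ℕ → ℕ
  s' : ℕ → ℕ
  us : ℕ → ℕ
  ss : ℕ → ℕ
  sol : ℕ → Finset GEdge
  t_zero : t 0 = 0
  t_mono : ∀ i j, i ≤ j → j ≤ N → t i ≤ t j
  sol_zero : sol 0 = ∅
  /-- SQ2: `ρ i` is a lower bound on the distance from every replica of the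
  current solution (after the SQ1 additions) to `r_i`. -/
  rho_min : ∀ i, 1 ≤ i → i ≤ N →
    ∀ q ∈ Repl (sol (i - 1) ∪ vertPath 0 (t (i - 1)) (t i)),
      (ρ i : ℕ∞) ≤ distInf q (v i, t i)
  /-- SQ2: the closest replica belongs to the current solution. -/
  closest_mem : ∀ i, 1 ≤ i → i ≤ N →
    (u' i, s' i) ∈ Repl (sol (i - 1) ∪ vertPath 0 (t (i - 1)) (t i))
  /-- SQ2: the closest replica attains the radius. -/
  closest_dist : ∀ i, 1 ≤ i → i ≤ N →
    distInf (u' i, s' i) (v i, t i) = (ρ i : ℕ∞)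
  /-- SQ2: among replicas of node `u' i`, the closest replica is the latest. -/
  closest_late : ∀ i, 1 ≤ i → i ≤ N → ∀ s, s ≤ t i →
    (u' i, s) ∈ Repl (sol (i - 1) ∪ vertPath 0 (t (i - 1)) (t i)) → s ≤ s' i
  /-- SQ3: the serving replica is in the current solution and in `Sq(r_i, 5ρ i)`. -/
  serv_mem : ∀ i, 1 ≤ i → i ≤ N →
    (us i, ss i) ∈ Repl (sol (i - 1) ∪ vertPath 0 (t (i - 1)) (t i)) ∧
      (us i, ss i) ∈ SqRect (v i, t i) (5 * ρ i)
  /-- SQ3: the serving node is leftmost. -/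
  serv_min : ∀ i, 1 ≤ i → i ≤ N →
    ∀ q ∈ Repl (sol (i - 1) ∪ vertPath 0 (t (i - 1)) (t i)),
      q ∈ SqRect (v i, t i) (5 * ρ i) → us i ≤ q.1
  /-- SQ3: among those, the serving time is latest. -/
  serv_late : ∀ i, 1 ≤ i → i ≤ N →
    ∀ q ∈ Repl (sol (i - 1) ∪ vertPath 0 (t (i - 1)) (t i)),
      q ∈ SqRect (v i, t i) (5 * ρ i) → q.1 = us i → q.2 ≤ ss i
  /-- SQ1 + SQ4 + SQ5: the edges added while handling request `i`. -/
  step : ∀ i, 1 ≤ i → i ≤ N →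
    sol i = (sol (i - 1) ∪ vertPath 0 (t (i - 1)) (t i))
      ∪ vertPath (us i) (ss i) (t i) ∪ horizPath (t i) (us i) (v i)
      ∪ vertPath (us i) (t i) (t i + 4 * ρ i)

namespace SquareRun

variable (S : SquareRun)

/-- The `i`-th request replica. -/
def req (i : ℕ) : Replica := (S.v i, S.t i)

/-- The edges added in steps SQ4 and SQ5 while handling request `i`. -/
def added45 (i : ℕ) : Finset GEdge :=
  vertPath (S.us i) (S.ss i) (S.t i) ∪ horizPath (S.t i) (S.us i) (S.v i)
    ∪ vertPath (S.us i) (S.t i) (S.t i + 4 * S.ρ i)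

/-- Request `i` is covered if `v_i − u^s_i ≥ ρ(i)`. -/
def covered (i : ℕ) : Prop := S.ρ i ≤ S.v i - S.us i

def uncovered (i : ℕ) : Prop := ¬ S.covered i

/-- A feasible solution of the DMCD instance given by the requests of `S`. -/
def Feasible (F : Finset GEdge) : Prop :=
  (∀ e ∈ F, isGridEdge e) ∧
  (∀ i, 1 ≤ i → i ≤ S.N → PathIn F (0, 0) (S.req i)) ∧
  (∀ τ, τ < S.t S.N → ∃ w, ((w, τ), (w, τ + 1)) ∈ F)

/-- `S.IsParent i j` means `parent(j) = i`:  `i` is the least index greater than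
`j` such that `r_i` is uncovered and `SQball(j)`, `SQball(i)` are not
edge-disjoint. -/
def IsParent (i j : ℕ) : Prop :=
  1 ≤ j ∧ j < i ∧ i ≤ S.N ∧ S.uncovered j ∧ S.uncovered i ∧
    ¬ BallsEdgeDisjoint (S.req j) (S.ρ j) (S.req i) (S.ρ i) ∧
    ∀ k, j < k → k < i → S.uncovered k →
      BallsEdgeDisjoint (S.req j) (S.ρ j) (S.req k) (S.ρ k)

/-- A root: an uncovered request with no parent. -/
def IsRoot (i : ℕ) : Prop :=
  1 ≤ i ∧ i ≤ S.N ∧ S.uncovered i ∧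
    ∀ j, i < j → j ≤ S.N → S.uncovered j →
      BallsEdgeDisjoint (S.req i) (S.ρ i) (S.req j) (S.ρ j)

/-- `i ∈ Tree(iStar)`: one can go from `i` to `iStar` by repeatedly passing from
a child to its parent. -/
def InTree (i iStar : ℕ) : Prop :=
  Relation.ReflTransGen (fun a b => S.IsParent b a) i iStar

end SquareRun

/-! Every request costs at most `14 ρ(i)` on top of the arcs at node `0`, so it suffices to bound
`∑ ρ(i)`. A path from the origin to `r_i` spends at least `ρ(i)` edges in the quarter ball
`B(r_i, ρ(i))`, hence the radii of requests with pairwise edge-disjoint balls add up to at most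
`|opt|`. This settles the covered requests, whose balls are disjoint from all later ones, and the
roots. If `i` is uncovered, the earlier requests `j` whose balls meet that of `i` have pairwise
disjoint time intervals `(t_j + ρ(j), t_j + 4ρ(j)]`, all contained in
`(t_i - ρ(i), t_i + ρ(i)]`, whence `3 ∑ ρ(j) ≤ 2 ρ(i)`. The radii of the non-roots are therefore
at most two thirds of those of all uncovered requests, which are bounded by three times those of
the roots. -/

/-! ### Paths and quarter balls in the grid -/

lemma Repl_union (A B : Finset GEdge) : Repl (A ∪ B) = Repl A ∪ Repl B := by
  ext q
  simp only [Repl, Set.mem_insert_iff, Set.mem_ofPred_eq, Finset.mem_union, Set.mem_union]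
  grind

lemma mem_Repl_vertPath {u s τ : ℕ} {q : Replica} :
    q ∈ Repl (vertPath u s τ) ↔ q = (0, 0) ∨ s < τ ∧ q.1 = u ∧ s ≤ q.2 ∧ q.2 ≤ τ := by
  obtain ⟨x, y⟩ := q
  simp only [Repl, vertPath, Set.mem_insert_iff, Set.mem_ofPred_eq, mem_image, mem_range,
    exists_exists_and_eq_and, Prod.mk.injEq]
  refine or_congr_right ⟨by rintro ⟨k, hk, h⟩; omega, fun h => ?_⟩
  rcases eq_or_lt_of_le h.2.2.2 with rfl | hy
  · exact ⟨y - 1 - s, by omega, Or.inr ⟨by omega, by omega⟩⟩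
  · exact ⟨y - s, by omega, Or.inl ⟨by omega, by omega⟩⟩

lemma mem_Repl_horizPath {τ u w : ℕ} {q : Replica} :
    q ∈ Repl (horizPath τ u w) ↔ q = (0, 0) ∨ u < w ∧ q.2 = τ ∧ u ≤ q.1 ∧ q.1 ≤ w := by
  obtain ⟨x, y⟩ := q
  simp only [Repl, horizPath, Set.mem_insert_iff, Set.mem_ofPred_eq, mem_image, mem_range,
    exists_exists_and_eq_and, Prod.mk.injEq]
  refine or_congr_right ⟨by rintro ⟨k, hk, h⟩; omega, fun h => ?_⟩
  rcases eq_or_lt_of_le h.2.2.2 with rfl | hx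
  · exact ⟨x - 1 - u, by omega, Or.inr ⟨by omega, by omega⟩⟩
  · exact ⟨x - u, by omega, Or.inl ⟨by omega, by omega⟩⟩

lemma card_vertPath_le (u s τ : ℕ) : #(vertPath u s τ) ≤ τ - s :=
  card_image_le.trans_eq (card_range _)

lemma card_horizPath_le (τ u w : ℕ) : #(horizPath τ u w) ≤ w - u :=
  card_image_le.trans_eq (card_range _)

lemma isGridEdge.le_and_sum_eq {e : GEdge} (he : isGridEdge e) :
    e.1 ≤ e.2 ∧ e.2.1 + e.2.2 = e.1.1 + e.1.2 + 1 := by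
  rw [Prod.le_def]
  rcases he with h | h <;> rw [h] <;> simp only <;> omega

lemma PathIn.exists_edge_of_sum_eq {F : Finset GEdge} (hF : ∀ e ∈ F, isGridEdge e) {a b : Replica}
    (hab : PathIn F a b) {m : ℕ} (ham : a.1 + a.2 ≤ m) (hmb : m < b.1 + b.2) :
    ∃ e ∈ F, e.1.1 + e.1.2 = m ∧ e.2 ≤ b := by
  obtain ⟨L, f, rfl, rfl, hf⟩ := hab
  induction L with
  | zero => omega
  | succ L ih =>
    have hlast := hf L L.lt_succ_self
    obtain ⟨hle, hsum⟩ := (hF _ hlast).le_and_sum_eq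
    rcases eq_or_lt_of_le (show m ≤ (f L).1 + (f L).2 by simp only at hsum; omega) with rfl | hm
    · exact ⟨_, hlast, rfl, le_rfl⟩
    · obtain ⟨e, he, hem, heb⟩ := ih (fun k hk => hf k (hk.trans L.lt_succ_self)) hm
      exact ⟨e, he, hem, heb.trans hle⟩

open Classical in
lemma PathIn.le_card_filter_ballEdge {F : Finset GEdge} (hF : ∀ e ∈ F, isGridEdge e)
    {a r : Replica} (har : PathIn F a r) {ρ : ℕ} (hρ : a.1 + a.2 + ρ ≤ r.1 + r.2) :
    ρ ≤ #{e ∈ F | ballEdge r ρ e} := by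
  have hlevels : Ico (r.1 + r.2 - ρ) (r.1 + r.2) ⊆
      image (fun e : GEdge => e.1.1 + e.1.2) {e ∈ F | ballEdge r ρ e} := by
    intro m hm
    rw [mem_Ico] at hm
    obtain ⟨e, he, hem, her⟩ := har.exists_edge_of_sum_eq hF (by omega) hm.2
    obtain ⟨hle, hsum⟩ := (hF e he).le_and_sum_eq
    rw [Prod.le_def] at her hle
    refine mem_image.2 ⟨e, mem_filter.2 ⟨he, hF e he, ⟨?_, ?_, ?_⟩, ⟨her.1, her.2, ?_⟩⟩, hem⟩ <;>
      omega
  calc ρ = #(Ico (r.1 + r.2 - ρ) (r.1 + r.2)) := by rw [Nat.card_Ico]; omega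
    _ ≤ #(image (fun e : GEdge => e.1.1 + e.1.2) {e ∈ F | ballEdge r ρ e}) := card_le_card hlevels
    _ ≤ #{e ∈ F | ballEdge r ρ e} := card_image_le

lemma natCast_le_distInf_iff {q r : Replica} {n : ℕ} :
    (n : ℕ∞) ≤ distInf q r ↔ (q ≤ r → n ≤ max (r.1 - q.1) (r.2 - q.2)) := by
  rw [distInf, Prod.le_def]
  split_ifs with h <;> simp [h]

lemma distInf_eq_natCast_iff {q r : Replica} {n : ℕ} :
    distInf q r = n ↔ q ≤ r ∧ max (r.1 - q.1) (r.2 - q.2) = n := by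
  rw [distInf, Prod.le_def]
  split_ifs with h <;> simp [h, -Nat.cast_max]

lemma exists_le_of_not_ballsEdgeDisjoint {r r' : Replica} {ρ ρ' : ℕ}
    (h : ¬ BallsEdgeDisjoint r ρ r' ρ') :
    ∃ q : Replica, q ≤ r ∧ (r.1 - q.1) + (r.2 - q.2) < ρ ∧
      q ≤ r' ∧ (r'.1 - q.1) + (r'.2 - q.2) < ρ' := by
  simp only [BallsEdgeDisjoint, not_forall, not_not] at h
  obtain ⟨e, ⟨hgrid, ⟨-, -, hρ⟩, hr1, hr2, -⟩, -, ⟨-, -, hρ'⟩, hr1', hr2', -⟩ := h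
  obtain ⟨hle, hsum⟩ := hgrid.le_and_sum_eq
  rw [Prod.le_def] at hle
  exact ⟨e.2, ⟨hr1, hr2⟩, by omega, ⟨hr1', hr2'⟩, by omega⟩

open Classical in
lemma sum_card_filter_ballEdge_le {ι : Type*} [LinearOrder ι] (F : Finset GEdge) {I : Finset ι}
    {r : ι → Replica} {ρ : ι → ℕ}
    (hI : ∀ i ∈ I, ∀ j ∈ I, i < j → BallsEdgeDisjoint (r i) (ρ i) (r j) (ρ j)) :
    ∑ i ∈ I, #{e ∈ F | ballEdge (r i) (ρ i) e} ≤ #F := by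
  have hdisj : (I : Set ι).PairwiseDisjoint fun i => {e ∈ F | ballEdge (r i) (ρ i) e} := by
    intro i hi j hj hij
    refine disjoint_filter.2 fun e _ hei hej => ?_
    rcases hij.lt_or_gt with h | h
    · exact hI i hi j hj h e ⟨hei, hej⟩
    · exact hI j hj i hi h e ⟨hej, hei⟩
  rw [← card_biUnion hdisj]
  exact card_le_card (biUnion_subset.2 fun i _ => filter_subset _ _)

lemma sum_sub_le_of_separated {ι : Type*} [LinearOrder ι] {s : Finset ι} {a b : ι → ℕ} {A B : ℕ}
    (hA : ∀ j ∈ s, A ≤ a j) (hB : ∀ j ∈ s, b j ≤ B)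
    (hsep : ∀ j ∈ s, ∀ k ∈ s, j < k → b j ≤ a k) :
    ∑ j ∈ s, (b j - a j) ≤ B - A := by
  have hdisj : (s : Set ι).PairwiseDisjoint fun j => Ioc (a j) (b j) := by
    intro j hj k hk hjk
    rcases hjk.lt_or_gt with h | h
    · exact Ioc_disjoint_Ioc_of_le (hsep j hj k hk h)
    · exact (Ioc_disjoint_Ioc_of_le (hsep k hk j hj h)).symm
  calc ∑ j ∈ s, (b j - a j) = #(s.biUnion fun j => Ioc (a j) (b j)) := by
        simp only [card_biUnion hdisj, Nat.card_Ioc]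
    _ ≤ #(Ioc A B) :=
        card_le_card (biUnion_subset.2 fun j hj => Ioc_subset_Ioc (hA j hj) (hB j hj))
    _ = B - A := Nat.card_Ioc A B

namespace SquareRun

variable {S : SquareRun} {F : Finset GEdge} {i j k l : ℕ} {q : Replica}

/-! ### The replicas of the solution -/

variable (S) in
/-- The solution after the extension (SQ1), from which the closest and the serving replica of
request `i` are chosen. -/
def current (i : ℕ) : Finset GEdge := S.sol (i - 1) ∪ vertPath 0 (S.t (i - 1)) (S.t i)

variable (S) in
/-- The replicas on the paths added in (SQ4) and (SQ5) for request `i`: the vertical segment at the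
serving node and the horizontal segment at time `t_i`. -/
def trace (i : ℕ) : Set Replica :=
  {q | q.1 = S.us i ∧ S.ss i ≤ q.2 ∧ q.2 ≤ S.t i + 4 * S.ρ i ∨
    q.2 = S.t i ∧ S.us i ≤ q.1 ∧ q.1 ≤ S.v i}

lemma us_le_v (hi : 1 ≤ i) (hiN : i ≤ S.N) : S.us i ≤ S.v i := (S.serv_mem i hi hiN).2.2.1

lemma v_le_us_add (hi : 1 ≤ i) (hiN : i ≤ S.N) : S.v i ≤ S.us i + 5 * S.ρ i :=
  tsub_le_iff_right.1 (S.serv_mem i hi hiN).2.1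

lemma ss_le_t (hi : 1 ≤ i) (hiN : i ≤ S.N) : S.ss i ≤ S.t i := (S.serv_mem i hi hiN).2.2.2.2

lemma t_le_ss_add (hi : 1 ≤ i) (hiN : i ≤ S.N) : S.t i ≤ S.ss i + 5 * S.ρ i :=
  tsub_le_iff_right.1 (S.serv_mem i hi hiN).2.2.2.1

lemma sol_eq_current_union (hi : 1 ≤ i) (hiN : i ≤ S.N) :
    S.sol i = S.current i ∪ S.added45 i := by
  simp only [S.step i hi hiN, current, added45, union_assoc]

lemma Repl_sol (hi : 1 ≤ i) (hiN : i ≤ S.N) :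
    Repl (S.sol i) = Repl (S.current i) ∪ S.trace i := by
  have hserv : (S.us i, S.ss i) ∈ Repl (S.current i) := (S.serv_mem i hi hiN).1
  have hzero : ((0, 0) : Replica) ∈ Repl (S.current i) := Set.mem_insert _ _
  have hss := ss_le_t hi hiN
  rw [sol_eq_current_union hi hiN]
  ext ⟨x, y⟩
  simp only [added45, Repl_union, Set.mem_union, mem_Repl_vertPath, mem_Repl_horizPath, trace,
    Set.mem_ofPred_eq, Prod.mk.injEq]
  by_cases hold : (x, y) ∈ Repl (S.current i)
  · simp only [hold, true_or]
  · have hne_zero : ¬ (x = 0 ∧ y = 0) := by rintro ⟨rfl, rfl⟩; exact hold hzero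
    have hne_serv : ¬ (x = S.us i ∧ y = S.ss i) := by rintro ⟨rfl, rfl⟩; exact hold hserv
    simp only [hold, false_or]
    omega

lemma mem_Repl_current (hi : 1 ≤ i) (hiN : i ≤ S.N) :
    q ∈ Repl (S.current i) ↔
      (q.1 = 0 ∧ q.2 ≤ S.t i) ∨ ∃ l, 1 ≤ l ∧ l < i ∧ q ∈ S.trace l := by
  obtain ⟨x, y⟩ := q
  induction i, hi using Nat.le_induction with
  | base =>
    have hnone : ¬ ∃ l, 1 ≤ l ∧ l < 1 ∧ (x, y) ∈ S.trace l := by rintro ⟨l, hl, hl', -⟩; omega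
    simp only [hnone, or_false, current, Nat.sub_self, S.sol_zero, S.t_zero, empty_union,
      mem_Repl_vertPath, Prod.mk.injEq]
    omega
  | succ i hi ih =>
    have hlast : (∃ l, 1 ≤ l ∧ l < i + 1 ∧ (x, y) ∈ S.trace l) ↔
        (∃ l, 1 ≤ l ∧ l < i ∧ (x, y) ∈ S.trace l) ∨ (x, y) ∈ S.trace i := by
      simp only [Nat.lt_succ_iff_lt_or_eq]
      grind
    have ht := S.t_mono i (i + 1) i.le_succ hiN
    rw [hlast, current, Nat.add_sub_cancel, Repl_union, Repl_sol hi (by omega), Set.mem_union,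
      Set.mem_union, mem_Repl_vertPath, ih (by omega), Prod.mk.injEq]
    grind

lemma mem_current_of_trace (hl : 1 ≤ l) (hli : l < i) (hiN : i ≤ S.N) (hq : q ∈ S.trace l) :
    q ∈ Repl (S.current i) :=
  (mem_Repl_current (by omega) hiN).2 (Or.inr ⟨l, hl, hli, hq⟩)

lemma mk_zero_t_mem_current (hi : 1 ≤ i) (hiN : i ≤ S.N) :
    ((0, S.t i) : Replica) ∈ Repl (S.current i) :=
  (mem_Repl_current hi hiN).2 (Or.inl ⟨rfl, le_rfl⟩)

lemma mk_mem_trace (hl : 1 ≤ l) (hlN : l ≤ S.N) (hq : q ∈ S.trace l) {τ : ℕ} (hτ : S.t l ≤ τ)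
    (hτ' : τ ≤ max q.2 (S.t l)) : (q.1, τ) ∈ S.trace l := by
  have hss := ss_le_t hl hlN
  simp only [trace, Set.mem_ofPred_eq] at hq ⊢
  omega

lemma mk_min_t_mem_current (hi : 1 ≤ i) (hiN : i ≤ S.N) (hq : q ∈ Repl (S.current i)) :
    (q.1, min q.2 (S.t i)) ∈ Repl (S.current i) := by
  rcases le_total q.2 (S.t i) with h | h
  · rwa [min_eq_left h]
  · rw [min_eq_right h]
    rcases (mem_Repl_current hi hiN).1 hq with ⟨h0, -⟩ | ⟨l, hl, hli, hql⟩
    · rw [h0]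
      exact mk_zero_t_mem_current hi hiN
    · exact mem_current_of_trace hl hli hiN
        (mk_mem_trace hl (by omega) hql (S.t_mono l i hli.le hiN) (le_max_of_le_left h))

lemma us_le_fst_of_trace (hl : 1 ≤ l) (hlN : l ≤ S.N) (hq : q ∈ S.trace l) :
    S.us l ≤ q.1 ∧ q.1 ≤ S.v l := by
  have hus := us_le_v hl hlN
  simp only [trace, Set.mem_ofPred_eq] at hq
  omega

/-! ### Radii, closest and serving replicas -/

lemma rho_le_max (hi : 1 ≤ i) (hiN : i ≤ S.N) (hq : q ∈ Repl (S.current i)) (hqr : q ≤ S.req i) :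
    S.ρ i ≤ max (S.v i - q.1) (S.t i - q.2) :=
  natCast_le_distInf_iff.1 (S.rho_min i hi hiN q hq) hqr

lemma rho_le_max_of_trace (hl : 1 ≤ l) (hli : l < i) (hiN : i ≤ S.N) (hq : q ∈ S.trace l)
    (hqr : q ≤ S.req i) : S.ρ i ≤ max (S.v i - q.1) (S.t i - q.2) :=
  rho_le_max (by omega) hiN (mem_current_of_trace hl hli hiN hq) hqr

lemma us_le_of_mem_current (hi : 1 ≤ i) (hiN : i ≤ S.N) (hq : q ∈ Repl (S.current i))
    (hqr : q ≤ S.req i) (hv : S.v i ≤ q.1 + 5 * S.ρ i) (ht : S.t i ≤ q.2 + 5 * S.ρ i) :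
    S.us i ≤ q.1 :=
  S.serv_min i hi hiN q hq ⟨tsub_le_iff_right.2 hv, hqr.1, tsub_le_iff_right.2 ht, hqr.2⟩

lemma closest_le_req (hi : 1 ≤ i) (hiN : i ≤ S.N) : (S.u' i, S.s' i) ≤ S.req i :=
  (distInf_eq_natCast_iff.1 (S.closest_dist i hi hiN)).1

lemma max_closest_eq_rho (hi : 1 ≤ i) (hiN : i ≤ S.N) :
    max (S.v i - S.u' i) (S.t i - S.s' i) = S.ρ i :=
  (distInf_eq_natCast_iff.1 (S.closest_dist i hi hiN)).2

lemma us_le_u' (hi : 1 ≤ i) (hiN : i ≤ S.N) : S.us i ≤ S.u' i := by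
  have hmax := max_closest_eq_rho hi hiN
  exact us_le_of_mem_current hi hiN (S.closest_mem i hi hiN) (closest_le_req hi hiN)
    (by dsimp only; omega) (by dsimp only; omega)

lemma t_le_s'_of_closest_mem_trace (hl : 1 ≤ l) (hli : l < i) (hiN : i ≤ S.N)
    (hmem : (S.u' i, S.s' i) ∈ S.trace l) : S.t l ≤ S.s' i :=
  S.closest_late i (by omega) hiN _ (S.t_mono l i hli.le hiN)
    (mem_current_of_trace hl hli hiN
      (mk_mem_trace hl (by omega) hmem le_rfl (le_max_right _ _)))

/-- The vertical segment of (SQ5) at `us l` lingers until `t_l + 4 ρ(l)`. -/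
lemma t_add_le_t_of_us_le_v (hl : 1 ≤ l) (hlk : l < k) (hkN : k ≤ S.N) (hus : S.us l ≤ S.v k)
    (hv : S.v k < S.us l + S.ρ k) : S.t l + 4 * S.ρ l + S.ρ k ≤ S.t k := by
  have hss := ss_le_t hl (hlk.le.trans hkN)
  have ht := S.t_mono l k hlk.le hkN
  have hρ := rho_le_max_of_trace (q := (S.us l, min (S.t l + 4 * S.ρ l) (S.t k))) hl hlk hkN
    (Or.inl ⟨rfl, by dsimp only; omega, min_le_left _ _⟩) ⟨hus, min_le_right _ _⟩
  simp only at hρ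
  omega

lemma covered.ballsEdgeDisjoint (hcov : S.covered j) (hj : 1 ≤ j) (hji : j < i) (hiN : i ≤ S.N) :
    BallsEdgeDisjoint (S.req j) (S.ρ j) (S.req i) (S.ρ i) := by
  by_contra hmeet
  obtain ⟨q, ⟨hqvj, hqtj⟩, hqj, ⟨hqvi, hqti⟩, hqi⟩ := exists_le_of_not_ballsEdgeDisjoint hmeet
  have ht := S.t_mono j i hji.le hiN
  simp only [req, covered] at *
  have hρ := rho_le_max_of_trace (q := (q.1, S.t j)) hj hji hiN
    (Or.inr ⟨rfl, by dsimp only; omega, hqvj⟩) ⟨hqvi, ht⟩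
  simp only at hρ
  omega

lemma uncovered.v_lt_us_add (hunc : S.uncovered i) : S.v i < S.us i + S.ρ i := by
  simp only [uncovered, covered] at hunc
  omega

lemma uncovered.s'_add_rho (hunc : S.uncovered i) (hi : 1 ≤ i) (hiN : i ≤ S.N) :
    S.s' i + S.ρ i = S.t i := by
  have hv := hunc.v_lt_us_add
  have hus := us_le_u' hi hiN
  have hmax := max_closest_eq_rho hi hiN
  have hle : S.u' i ≤ S.v i ∧ S.s' i ≤ S.t i := closest_le_req hi hiN
  omega

/-! ### Requests whose quarter balls meet -/

variable (S) in
/-- Request `j` precedes request `i` and their quarter balls share an edge. When both requests are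
uncovered, this is the paper's parent relation `S.IsParent i j` without the minimality of `i`. -/
structure Overlap (j i : ℕ) : Prop where
  one_le : 1 ≤ j
  lt : j < i
  le_N : i ≤ S.N
  not_disjoint : ¬ BallsEdgeDisjoint (S.req j) (S.ρ j) (S.req i) (S.ρ i)

namespace Overlap

lemma t_le_t (h : S.Overlap j i) : S.t j ≤ S.t i := S.t_mono j i h.lt.le h.le_N

lemma uncovered (h : S.Overlap j i) : S.uncovered j :=
  fun hcov => h.not_disjoint (hcov.ballsEdgeDisjoint h.one_le h.lt h.le_N)

lemma v_lt_v_add (h : S.Overlap j i) : S.v j < S.v i + S.ρ j := by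
  obtain ⟨q, ⟨hqvj, -⟩, hqj, ⟨hqvi, -⟩, -⟩ := exists_le_of_not_ballsEdgeDisjoint h.not_disjoint
  simp only [req] at *
  omega

lemma t_lt_t_add (h : S.Overlap j i) : S.t i < S.t j + S.ρ i := by
  obtain ⟨q, ⟨-, hqtj⟩, -, ⟨-, hqti⟩, hqi⟩ := exists_le_of_not_ballsEdgeDisjoint h.not_disjoint
  simp only [req] at *
  omega

lemma v_lt_us (h : S.Overlap j i) : S.v i < S.us j := by
  by_contra! hus
  obtain ⟨q, ⟨hqvj, hqtj⟩, -, ⟨hqvi, hqti⟩, hqi⟩ :=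
    exists_le_of_not_ballsEdgeDisjoint h.not_disjoint
  have husv := us_le_v h.one_le (h.lt.le.trans h.le_N)
  simp only [req] at *
  have hρ := rho_le_max_of_trace (q := (max q.1 (S.us j), S.t j)) h.one_le h.lt h.le_N
    (Or.inr ⟨rfl, le_max_right _ _, max_le hqvj husv⟩) ⟨max_le hqvi hus, h.t_le_t⟩
  simp only at hρ
  omega

/-- Otherwise the horizontal segment of `l` passes through `(v_i, t_l)`, too close to `r_i`. -/
lemma v_lt_us_of_trace (h : S.Overlap j i) (hjl : j ≤ l) (hli : l < i) (hq : q ∈ S.trace l)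
    (hvq : S.v i < q.1) : S.v i < S.us l := by
  by_contra! hus
  have hl := h.one_le.trans hjl
  have hiN := h.le_N
  have hqv := (us_le_fst_of_trace hl (by omega) hq).2
  have htli := S.t_mono l i hli.le hiN
  have hρ := rho_le_max_of_trace (q := (S.v i, S.t l)) hl hli hiN
    (Or.inr ⟨rfl, hus, by dsimp only; omega⟩) ⟨le_rfl, htli⟩
  have ht := h.t_lt_t_add
  have htl := S.t_mono j l hjl (by omega)
  simp only at hρ
  omega

lemma four_mul_rho_lt (h : S.Overlap j i) (hunc : S.uncovered i) : 4 * S.ρ j < S.ρ i := by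
  have hj := h.one_le
  have hi : 1 ≤ i := hj.trans h.lt.le
  have hiN := h.le_N
  have hjN := h.lt.le.trans hiN
  have hs' := hunc.s'_add_rho hi hiN
  have ht := h.t_lt_t_add
  have hold : (S.u' i, S.s' i) ∈ Repl (S.current j) := by
    rcases (mem_Repl_current hi hiN).1 (S.closest_mem i hi hiN) with ⟨h0, -⟩ | ⟨l, hl, hli, hmem⟩
    · have hlate := S.closest_late i hi hiN (S.t i) le_rfl
        (by rw [show S.u' i = 0 from h0]; exact mk_zero_t_mem_current hi hiN)
      have htj := h.t_le_t
      omega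
    · rcases lt_or_ge l j with hlj | hjl
      · exact mem_current_of_trace hl hlj hjN hmem
      · have hlate := t_le_s'_of_closest_mem_trace hl hli hiN hmem
        have htl := S.t_mono j l hjl (by omega)
        omega
  by_contra! hsmall
  have hle : S.u' i ≤ S.v i ∧ S.s' i ≤ S.t i := closest_le_req hi hiN
  have hus := us_le_u' hi hiN
  have hvi := hunc.v_lt_us_add
  have hvj := h.v_lt_v_add
  have hviu := h.v_lt_us
  have huv := us_le_v hj hjN
  have htj := h.t_le_t
  have husj : S.us j ≤ S.u' i := us_le_of_mem_current hj hjN hold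
    ⟨by simp only [req]; omega, by simp only [req]; omega⟩ (by dsimp only; omega)
    (by dsimp only; omega)
  omega

lemma snd_add_lt_t_of_mem_current (h : S.Overlap j i) (hq : q ∈ Repl (S.current j))
    (hvq : S.v i < q.1) (hqus : q.1 < S.us j) : q.2 + 5 * S.ρ j < S.t j := by
  have hj := h.one_le
  have hjN := h.lt.le.trans h.le_N
  have hvj := h.v_lt_v_add
  have huv := us_le_v hj hjN
  by_contra! hlate
  have hus := us_le_of_mem_current hj hjN (mk_min_t_mem_current hj hjN hq)
    ⟨by simp only [req]; omega, min_le_right _ _⟩ (by dsimp only; omega) (by dsimp only; omega)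
  simp only at hus
  omega

/-- Such a replica lies on no trace of the requests in `[j, m)`, so it was available to `j`, whose
serving node is further right. -/
lemma snd_add_lt_t {m : ℕ} (h : S.Overlap j i) (hjm : j < m) (hmi : m ≤ i)
    (hq : q ∈ Repl (S.current m)) (hvq : S.v i < q.1)
    (hleft : ∀ l, j ≤ l → l < m → S.v i < S.us l → q.1 < S.us l) :
    q.2 + 5 * S.ρ j < S.t j := by
  have hmN := hmi.trans h.le_N
  refine h.snd_add_lt_t_of_mem_current ?_ hvq (hleft j le_rfl hjm h.v_lt_us)
  rcases (mem_Repl_current (by omega) hmN).1 hq with ⟨h0, -⟩ | ⟨l, hl, hlm, hql⟩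
  · omega
  · rcases lt_or_ge l j with hlj | hjl
    · exact mem_current_of_trace hl hlj (by omega) hql
    · have hlt := hleft l hjl hlm (h.v_lt_us_of_trace hjl (by omega) hql hvq)
      have hle := (us_le_fst_of_trace hl (by omega) hql).1
      omega

lemma exists_leftmost (h : S.Overlap j i) (hjk : j < k) :
    ∃ m, j ≤ m ∧ m < k ∧ S.v i < S.us m ∧
      ∀ l, j ≤ l → l < k → S.v i < S.us l → S.us m < S.us l ∨ S.us m = S.us l ∧ m ≤ l := by
  obtain ⟨m, hm, hmin⟩ := exists_min_image {l ∈ Ico j k | S.v i < S.us l}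
    (fun l => toLex (S.us l, l)) ⟨j, by simp [hjk, h.v_lt_us]⟩
  simp only [mem_filter, mem_Ico, Prod.Lex.toLex_le_toLex] at hm hmin
  exact ⟨m, hm.1.1, hm.1.2, hm.2, fun l hjl hlk hv => hmin l ⟨⟨hjl, hlk⟩, hv⟩⟩

lemma rho_le_rho_of_leftmost {m : ℕ} (h : S.Overlap j i) (hjm : j ≤ m) (hmi : m < i)
    (hv : S.v i < S.us m) (hleft : ∀ l, j ≤ l → l < m → S.v i < S.us l → S.us m < S.us l) :
    S.ρ j ≤ S.ρ m := by
  rcases hjm.eq_or_lt with rfl | hlt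
  · exact le_rfl
  · have hm := h.one_le.trans hjm
    have hmN := hmi.le.trans h.le_N
    have hserv := h.snd_add_lt_t hlt hmi.le (S.serv_mem m hm hmN).1 hv hleft
    have hss := t_le_ss_add hm hmN
    have ht := S.t_mono j m hjm hmN
    simp only at hserv
    omega

/-- The time intervals `(t j + ρ j, t j + 4 ρ j]` of the requests overlapping `i` are disjoint: the
leftmost serving node `us m > v i` of the requests in `[j, k)` is either within reach of request
`k`, which then comes after the vertical segment of `m`, or it is not, and then the replica closest
to `r_k` is older than `j` and was out of reach of `j`. -/
lemma t_add_four_mul_le (hj : S.Overlap j i) (hk : S.Overlap k i) (hjk : j < k) :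
    S.t j + 4 * S.ρ j ≤ S.t k + S.ρ k := by
  obtain ⟨m, hjm, hmk, hvm, hleft⟩ := hj.exists_leftmost hjk
  have hkpos := hk.one_le
  have hki := hk.lt
  have hkN := hki.le.trans hk.le_N
  rcases le_or_gt (S.us m) (S.v k) with hreach | hreach
  · have hρ : S.ρ j ≤ S.ρ m := hj.rho_le_rho_of_leftmost hjm (hmk.trans hki) hvm
      fun l hjl hlm hv => (hleft l hjl (hlm.trans hmk) hv).resolve_right fun h => by omega
    have hvk := hk.v_lt_v_add
    have hlinger := t_add_le_t_of_us_le_v (hj.one_le.trans hjm) hmk hkN hreach (by omega)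
    have ht := S.t_mono j m hjm (by omega)
    omega
  · have hu' : S.u' k ≤ S.v k := (closest_le_req hkpos hkN).1
    have hus := us_le_u' hkpos hkN
    have hvk := hk.v_lt_us
    have hfar := hj.snd_add_lt_t hjk hki.le (S.closest_mem k hkpos hkN) (by dsimp only; omega)
      fun l hjl hlk hv => by have := hleft l hjl hlk hv; dsimp only; omega
    have hs' := hk.uncovered.s'_add_rho hkpos hkN
    have ht := S.t_mono j k hjk.le hkN
    simp only at hfar
    omega

end Overlap

lemma uncovered.three_mul_sum_rho_le (hunc : S.uncovered i) {s : Finset ℕ}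
    (hs : ∀ j ∈ s, S.Overlap j i) : 3 * ∑ j ∈ s, S.ρ j ≤ 2 * S.ρ i := by
  have hpacked := sum_sub_le_of_separated (s := s) (A := S.t i - S.ρ i) (B := S.t i + S.ρ i)
    (a := fun j => S.t j + S.ρ j) (b := fun j => S.t j + 4 * S.ρ j)
    (fun j hj => by have := (hs j hj).t_lt_t_add; omega)
    (fun j hj => by
      have := (hs j hj).t_le_t
      have := (hs j hj).four_mul_rho_lt hunc
      omega)
    (fun j hj k hk hjk => (hs j hj).t_add_four_mul_le (hs k hk) hjk)
  calc 3 * ∑ j ∈ s, S.ρ j = ∑ j ∈ s, (S.t j + 4 * S.ρ j - (S.t j + S.ρ j)) := by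
        rw [mul_sum]
        exact sum_congr rfl fun j _ => by omega
    _ ≤ S.t i + S.ρ i - (S.t i - S.ρ i) := hpacked
    _ ≤ 2 * S.ρ i := by omega

/-! ### Cost of the algorithm and of a feasible solution -/

lemma card_added45_le (hi : 1 ≤ i) (hiN : i ≤ S.N) : #(S.added45 i) ≤ 14 * S.ρ i := by
  have hv := v_le_us_add hi hiN
  have ht := t_le_ss_add hi hiN
  calc #(S.added45 i)
      ≤ (S.t i - S.ss i) + (S.v i - S.us i) + (S.t i + 4 * S.ρ i - S.t i) :=
        (card_union_le _ _).trans <| add_le_add ((card_union_le _ _).trans <|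
          add_le_add (card_vertPath_le _ _ _) (card_horizPath_le _ _ _)) (card_vertPath_le _ _ _)
    _ ≤ 14 * S.ρ i := by omega

lemma card_current_le (i : ℕ) : #(S.current i) ≤ #(S.sol (i - 1)) + (S.t i - S.t (i - 1)) :=
  (card_union_le _ _).trans (Nat.add_le_add_left (card_vertPath_le _ _ _) _)

lemma card_sol_le {n : ℕ} (hn : n ≤ S.N) :
    #(S.sol n) ≤ S.t n + 14 * ∑ i ∈ Icc 1 n, S.ρ i := by
  induction n with
  | zero => simp [S.sol_zero]
  | succ n ih =>
    have hprev := ih (by omega)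
    have ht := S.t_mono n (n + 1) n.le_succ hn
    have hcurrent := S.card_current_le (n + 1)
    have hadded := card_added45_le (Nat.le_add_left 1 n) hn
    rw [Nat.add_sub_cancel] at hcurrent
    calc #(S.sol (n + 1)) ≤ #(S.current (n + 1)) + #(S.added45 (n + 1)) := by
          rw [sol_eq_current_union (Nat.le_add_left 1 n) hn]
          exact card_union_le _ _
      _ ≤ S.t (n + 1) + 14 * (∑ i ∈ Icc 1 n, S.ρ i + S.ρ (n + 1)) := by omega
      _ = S.t (n + 1) + 14 * ∑ i ∈ Icc 1 (n + 1), S.ρ i := by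
          rw [sum_Icc_succ_top (Nat.le_add_left 1 n)]

lemma Feasible.t_le_card (hF : S.Feasible F) : S.t S.N ≤ #F := by
  choose! w hw using hF.2.2
  calc S.t S.N = #(range (S.t S.N)) := (card_range _).symm
    _ ≤ #F := card_le_card_of_injOn (fun τ => ((w τ, τ), (w τ, τ + 1)))
        (fun τ hτ => hw τ (mem_range.1 hτ)) fun τ _ τ' _ h => congrArg (fun e => e.1.2) h

lemma Feasible.sum_rho_le_card (hF : S.Feasible F) {I : Finset ℕ} (hI : I ⊆ Icc 1 S.N)
    (hdisj : ∀ i ∈ I, ∀ j ∈ I, i < j → BallsEdgeDisjoint (S.req i) (S.ρ i) (S.req j) (S.ρ j)) :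
    ∑ i ∈ I, S.ρ i ≤ #F := by
  classical
  refine (sum_le_sum fun i hi => ?_).trans (sum_card_filter_ballEdge_le F hdisj)
  obtain ⟨hi, hiN⟩ := mem_Icc.1 (hI hi)
  refine (hF.2.1 i hi hiN).le_card_filter_ballEdge hF.1 ?_
  have hρ : S.ρ i ≤ max (S.v i - 0) (S.t i - 0) :=
    rho_le_max hi hiN (Set.mem_insert _ _) ⟨Nat.zero_le _, Nat.zero_le _⟩
  simp only [req]
  omega

open Classical in
lemma Feasible.sum_covered_le (hF : S.Feasible F) :
    ∑ i ∈ Icc 1 S.N with S.covered i, S.ρ i ≤ #F := by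
  refine hF.sum_rho_le_card (filter_subset _ _) fun i hi j hj hij => ?_
  rw [mem_filter, mem_Icc] at hi hj
  exact hi.2.ballsEdgeDisjoint hi.1.1 hij hj.1.2

open Classical in
lemma Feasible.sum_root_le (hF : S.Feasible F) : ∑ i ∈ Icc 1 S.N with S.IsRoot i, S.ρ i ≤ #F := by
  refine hF.sum_rho_le_card (filter_subset _ _) fun i hi j hj hij => ?_
  obtain ⟨-, -, -, hroot⟩ := (mem_filter.1 hi).2
  obtain ⟨-, hjN, hj, -⟩ := (mem_filter.1 hj).2
  exact hroot j hij hjN hj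

lemma uncovered.exists_overlap_of_not_isRoot (hunc : S.uncovered j) (hj : 1 ≤ j) (hjN : j ≤ S.N)
    (hroot : ¬ S.IsRoot j) : ∃ i, S.uncovered i ∧ S.Overlap j i := by
  simp only [IsRoot, hj, hjN, hunc, true_and, not_forall] at hroot
  obtain ⟨i, hji, hiN, hi, hmeet⟩ := hroot
  exact ⟨i, hi, hj, hji, hiN, hmeet⟩

open Classical in
variable (S) in
lemma sum_uncovered_le_three_mul_sum_root :
    ∑ i ∈ Icc 1 S.N with S.uncovered i, S.ρ i ≤ 3 * ∑ i ∈ Icc 1 S.N with S.IsRoot i, S.ρ i := by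
  set U := {i ∈ Icc 1 S.N | S.uncovered i} with hU
  set R := {i ∈ Icc 1 S.N | S.IsRoot i} with hR
  have hRU : R ⊆ U := monotone_filter_right _ fun _ _ h => h.2.2.1
  have hnonroot : ∀ j ∈ U \ R, ∃ i ∈ U, S.Overlap j i := by
    intro j hj
    simp only [hU, hR, mem_sdiff, mem_filter, mem_Icc] at hj ⊢
    obtain ⟨⟨⟨hj1, hjN⟩, hunc⟩, hroot⟩ := hj
    obtain ⟨i, hi, hji⟩ :=
      hunc.exists_overlap_of_not_isRoot hj1 hjN fun h => hroot ⟨⟨hj1, hjN⟩, h⟩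
    exact ⟨i, ⟨⟨hj1.trans hji.lt.le, hji.le_N⟩, hi⟩, hji⟩
  have hthird : 3 * ∑ j ∈ U \ R, S.ρ j ≤ 2 * ∑ i ∈ U, S.ρ i := by
    calc 3 * ∑ j ∈ U \ R, S.ρ j
        ≤ 3 * ∑ j ∈ U \ R, ∑ i ∈ U with S.Overlap j i, S.ρ j := by
          gcongr with j hj
          obtain ⟨i, hi, hji⟩ := hnonroot j hj
          exact single_le_sum (f := fun _ => S.ρ j) (fun _ _ => Nat.zero_le _)
            (mem_filter.2 ⟨hi, hji⟩)
      _ = ∑ i ∈ U, 3 * ∑ j ∈ U \ R with S.Overlap j i, S.ρ j := by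
          rw [← mul_sum]
          exact congrArg _ (sum_comm' (by simp only [mem_filter]; tauto))
      _ ≤ ∑ i ∈ U, 2 * S.ρ i := sum_le_sum fun i hi =>
          (mem_filter.1 hi).2.three_mul_sum_rho_le fun j hj => (mem_filter.1 hj).2
      _ = 2 * ∑ i ∈ U, S.ρ i := (mul_sum ..).symm
  have hsplit := sum_sdiff (f := S.ρ) hRU
  omega

open Classical in
variable (S) in
lemma sum_covered_add_sum_uncovered :
    ∑ i ∈ Icc 1 S.N with S.covered i, S.ρ i + ∑ i ∈ Icc 1 S.N with S.uncovered i, S.ρ i =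
      ∑ i ∈ Icc 1 S.N, S.ρ i := by
  convert sum_filter_add_sum_filter_not (Icc 1 S.N) S.covered S.ρ

end SquareRun

/-- Algorithm Square is `O(1)`-competitive: there is an absolute constant `c`
such that for every request sequence, `cost(Square, R) ≤ c·|opt|`. -/
theorem square_O1_competitive :
    ∃ c : ℕ, ∀ (S : SquareRun) (F : Finset GEdge), S.Feasible F →
      (S.sol S.N).card ≤ c * F.card := by
  classical
  refine ⟨57, fun S F hF => ?_⟩
  have htime := hF.t_le_card
  have hcov := hF.sum_covered_le
  have hunc := S.sum_uncovered_le_three_mul_sum_root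
  have hroot := hF.sum_root_le
  calc #(S.sol S.N) ≤ S.t S.N + 14 * ∑ i ∈ Icc 1 S.N, S.ρ i := SquareRun.card_sol_le le_rfl
    _ = S.t S.N + 14 * (∑ i ∈ Icc 1 S.N with S.covered i, S.ρ i +
          ∑ i ∈ Icc 1 S.N with S.uncovered i, S.ρ i) := by
        rw [S.sum_covered_add_sum_uncovered]
    _ ≤ #F + 14 * (#F + 3 * #F) := by gcongr; exact hunc.trans (Nat.mul_le_mul_left 3 hroot)
    _ = 57 * #F := by ring
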